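/- Suppose G is connected and p > r + 2, and set C_p = 2(p + r − 2)/(p − r − 2). Then every second-order critical point Y of the rank-p problem satisfies tr(Z Zᵀ (Y Yᵀ)ᵀ) ≥ (1 − C_p² ‖Δ‖²/λ₂²) · n² r. -/

import Mathlib

open Matrix MeasureTheory ProbabilityTheory
open scoped Kronecker BigOperators

namespace SyncPaper

variable {α : Type*}

/-- The `i`-th `r × p` row-block of a block matrix `Y ∈ α^{rn × p}`. -/
def blk {n r p : ℕ} (Y : Matrix (Fin n × Fin r) (Fin p) α) (i : Fin n) :
    Matrix (Fin r) (Fin p) α :=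
  Matrix.of fun a b => Y (i, a) b

/-- `Y` is feasible: every `r × p` row-block has orthonormal rows. -/
def Feasible {n r p : ℕ} (Y : Matrix (Fin n × Fin r) (Fin p) ℝ) : Prop :=
  ∀ i, blk Y i * (blk Y i)ᵀ = 1

/-- Symmetric block-diagonal projection: keeps the symmetric part of each `r × r`
diagonal block and zeroes out all off-diagonal blocks. -/
noncomputable def SBD {n r : ℕ} (M : Matrix (Fin n × Fin r) (Fin n × Fin r) ℝ) :
    Matrix (Fin n × Fin r) (Fin n × Fin r) ℝ :=
  Matrix.of fun q q' => if q.1 = q'.1 then (M q q' + M q' q) / 2 else 0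

/-- The matrix `S(Y) = L̂ − SBD(L̂ Y Yᵀ)`. -/
noncomputable def Smat {n r p : ℕ} (Lhat : Matrix (Fin n × Fin r) (Fin n × Fin r) ℝ)
    (Y : Matrix (Fin n × Fin r) (Fin p) ℝ) :
    Matrix (Fin n × Fin r) (Fin n × Fin r) ℝ :=
  Lhat - SBD (Lhat * Y * Yᵀ)

/-- Second-order critical point of the rank-`p` problem `min ⟨L̂, Y Yᵀ⟩` over feasible `Y`. -/
def IsSecondOrderCritical {n r p : ℕ} (Lhat : Matrix (Fin n × Fin r) (Fin n × Fin r) ℝ)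
    (Y : Matrix (Fin n × Fin r) (Fin p) ℝ) : Prop :=
  Feasible Y ∧ Smat Lhat Y * Y = 0 ∧
    ∀ Ydot : Matrix (Fin n × Fin r) (Fin p) ℝ,
      (∀ i, blk Ydot i * (blk Y i)ᵀ + blk Y i * (blk Ydot i)ᵀ = 0) →
      0 ≤ (Smat Lhat Y * Ydot * Ydotᵀ).trace

/-- The stacked ground truth `Z ∈ ℝ^{rn × r}`. -/
def Zstack {n r : ℕ} (Zb : Fin n → Matrix (Fin r) (Fin r) ℝ) :
    Matrix (Fin n × Fin r) (Fin r) ℝ :=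
  Matrix.of fun q b => Zb q.1 q.2 b

/-- The block-diagonal matrix `D` with diagonal blocks `Z_1, …, Z_n`. -/
def Dmat {n r : ℕ} (Zb : Fin n → Matrix (Fin r) (Fin r) ℝ) :
    Matrix (Fin n × Fin r) (Fin n × Fin r) ℝ :=
  Matrix.of fun q q' => if q.1 = q'.1 then Zb q.1 q.2 q'.2 else 0

/-- `L_Z = D (L ⊗ I_r) Dᵀ`. -/
def LZmat {n r : ℕ} (L : Matrix (Fin n) (Fin n) ℝ) (Zb : Fin n → Matrix (Fin r) (Fin r) ℝ) :
    Matrix (Fin n × Fin r) (Fin n × Fin r) ℝ :=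
  Dmat Zb * (L ⊗ₖ (1 : Matrix (Fin r) (Fin r) ℝ)) * (Dmat Zb)ᵀ

/-- The ℓ₂→ℓ₂ operator norm of a matrix. -/
noncomputable def opNorm {m m' : Type*} [Fintype m] [Fintype m'] [DecidableEq m']
    (M : Matrix m m' ℝ) : ℝ :=
  ‖(Matrix.toEuclideanLin (𝕜 := ℝ) (m := m) (n := m')).trans
      LinearMap.toContinuousLinearMap M‖

/-- The second-smallest eigenvalue of a connected graph Laplacian, via the variational
(Courant–Fischer) characterization: the minimum of the quadratic form over unit vectors
orthogonal to the all-ones vector. -/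
noncomputable def lam2 {n : ℕ} (L : Matrix (Fin n) (Fin n) ℝ) : ℝ :=
  sInf {t : ℝ | ∃ x : Fin n → ℝ, (∑ i, x i = 0) ∧ (∑ i, (x i) ^ 2 = 1) ∧ t = x ⬝ᵥ (L *ᵥ x)}

/-- Squared Frobenius norm of a real matrix. -/
def frobSq {m m' : Type*} [Fintype m] [Fintype m'] (M : Matrix m m' ℝ) : ℝ :=
  ∑ i, ∑ j, (M i j) ^ 2

/-- The inner product `⟨A, B⟩ = tr(A Bᵀ)`. -/
def ip {m : Type*} [Fintype m] (A B : Matrix m m ℝ) : ℝ := (A * Bᵀ).trace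

/-- Feasibility for the SDP relaxation. -/
def SDPFeasible {n r : ℕ} (X : Matrix (Fin n × Fin r) (Fin n × Fin r) ℝ) : Prop :=
  X.PosSemidef ∧ SBD X = 1

end SyncPaper

namespace SyncPaper

/-!
Writing `W = Z Zᵀ` and `X = Y Yᵀ`, test the second-order condition on the tangent directions that
move every `Y_i` towards the block `Z_i M` of a common target `Z M`. Summed over the standard basis
of `M ∈ ℝ^{r × p}`, the matrices `Ẏ Ẏᵀ` become `E = (p - 2) W + T ⊙ X`, where
`T i j = ⟨Z_iᵀ Y_i, Z_jᵀ Y_j⟩` is spread over the `r × r` blocks. All diagonal blocks of `E` are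
`(p + r - 2) I`, so the condition reads `tr (L̂ ((p + r - 2) X - E)) ≤ 0`.

Laplacian part: `tr (L_Z X) = tr (L T)` and `tr (L_Z (T ⊙ X)) = tr (L (T ⊙ T))`. As `T` has
diagonal `r` and `L` has nonpositive off-diagonal entries and zero row sums,
`tr (L (T ⊙ T)) ≤ 2 r tr (L T)`. What remains is `(p - r - 2) tr (L T)`, which is at least
`(p - r - 2) λ₂ s` for the deficit `s = n r - ‖Zᵀ Y‖²_F / n`.

Noise part: `(p + r - 2) X - E = (p - 2) (X - W) - (T - r) ⊙ X`, a combination of two differences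
of Gram matrices. Projecting one factor onto the column space of the other bounds the pairing of `Δ`
with each by `‖Δ‖ √(n r s)` up to constants; the factor `X` is absorbed because a Hadamard product
with a correlation matrix does not increase the operator norm. Comparing the two parts bounds `s`.
-/

section Frobenius

variable {m n κ : Type*} [Fintype m] [Fintype n] [Fintype κ]

lemma trace_mul_hadamard {R : Type*} [CommSemiring R] (A : Matrix m n R)
    (B C : Matrix n m R) : (A * (B ⊙ C)).trace = ((A ⊙ Cᵀ) * B).trace := by
  simp only [trace, diag_apply, mul_apply, hadamard_apply, transpose_apply]
  exact Finset.sum_congr rfl fun i _ ↦ Finset.sum_congr rfl fun j _ ↦ by ring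

lemma frobSq_nonneg (A : Matrix m n ℝ) : 0 ≤ frobSq A := by
  unfold frobSq
  positivity

lemma frobSq_eq_trace (A : Matrix m n ℝ) : frobSq A = (A * Aᵀ).trace := by
  simp only [frobSq, ← sum_hadamard_eq, hadamard_apply, sq]

lemma frobSq_transpose (A : Matrix m n ℝ) : frobSq Aᵀ = frobSq A :=
  Finset.sum_comm

lemma frobSq_eq_trace_transpose_mul (A : Matrix m n ℝ) : frobSq A = (Aᵀ * A).trace := by
  rw [← frobSq_transpose, frobSq_eq_trace, transpose_transpose]

lemma trace_gram_mul_gram_transpose (Z : Matrix m n ℝ) (Y : Matrix m κ ℝ) :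
    ((Z * Zᵀ) * (Y * Yᵀ)ᵀ).trace = frobSq (Zᵀ * Y) := by
  rw [frobSq_eq_trace, transpose_mul, transpose_mul, transpose_transpose, transpose_transpose,
    Matrix.mul_assoc, trace_mul_comm]
  simp only [Matrix.mul_assoc]

lemma frobSq_eq_sum_dotProduct (A : Matrix m n ℝ) : frobSq A = ∑ j, Aᵀ j ⬝ᵥ Aᵀ j := by
  rw [← frobSq_transpose]
  simp only [frobSq, dotProduct, sq]

lemma abs_trace_transpose_mul_le (A B : Matrix m n ℝ) :
    |(Aᵀ * B).trace| ≤ √(frobSq A * frobSq B) := by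
  refine Real.abs_le_sqrt ?_
  rw [trace_mul_comm, ← sum_hadamard_eq]
  simp only [frobSq, hadamard_apply, ← Fintype.sum_prod_type']
  rw [mul_comm (∑ _, _)]
  exact Finset.sum_mul_sq_le_sq_mul_sq _ _ _

lemma frobSq_smul (c : ℝ) (A : Matrix m n ℝ) : frobSq (c • A) = c ^ 2 * frobSq A := by
  simp only [frobSq, Matrix.smul_apply, smul_eq_mul, mul_pow, Finset.mul_sum]

lemma frobSq_vecMulVec (x : m → ℝ) (y : n → ℝ) :
    frobSq (vecMulVec x y) = (x ⬝ᵥ x) * (y ⬝ᵥ y) := by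
  simp only [frobSq, vecMulVec_apply, dotProduct, mul_pow, ← sq, Finset.sum_mul_sum]

lemma frobSq_diagonal_mul [DecidableEq m] (x : m → ℝ) (A : Matrix m n ℝ) :
    frobSq (diagonal x * A) = ∑ i, x i ^ 2 * (A * Aᵀ) i i := by
  simp only [frobSq, Matrix.diagonal_mul, mul_pow]
  simp only [mul_apply, transpose_apply, ← sq, Finset.mul_sum]

lemma frobSq_diagonal_mul_le [DecidableEq m] (x : m → ℝ) {A : Matrix m n ℝ}
    (hA : ∀ i, (A * Aᵀ) i i ≤ 1) : frobSq (diagonal x * A) ≤ x ⬝ᵥ x := by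
  rw [frobSq_diagonal_mul, dotProduct]
  refine Finset.sum_le_sum fun i _ ↦ ?_
  rw [← sq]
  exact mul_le_of_le_one_right (sq_nonneg _) (hA i)

end Frobenius

section OperatorNorm

open scoped Matrix.Norms.L2Operator

variable {m n κ : Type*} [Fintype m] [Fintype n] [Fintype κ] [DecidableEq n]

lemma opNorm_eq_norm (A : Matrix m n ℝ) : opNorm A = ‖A‖ :=
  (l2_opNorm_def A).symm

lemma opNorm_nonneg (A : Matrix m n ℝ) : 0 ≤ opNorm A :=
  norm_nonneg _

lemma dotProduct_self_eq_norm_sq (x : m → ℝ) : x ⬝ᵥ x = ‖WithLp.toLp 2 x‖ ^ 2 := by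
  rw [EuclideanSpace.real_norm_sq_eq]
  simp only [dotProduct, sq]

lemma dotProduct_mulVec_self_le (A : Matrix m n ℝ) (x : n → ℝ) :
    (A *ᵥ x) ⬝ᵥ (A *ᵥ x) ≤ opNorm A ^ 2 * (x ⬝ᵥ x) := by
  rw [dotProduct_self_eq_norm_sq, dotProduct_self_eq_norm_sq, ← mul_pow, opNorm_eq_norm]
  gcongr
  exact l2_opNorm_mulVec A (WithLp.toLp 2 x)

lemma opNorm_le_of_dotProduct_mulVec_le {A : Matrix m n ℝ} {C : ℝ} (hC : 0 ≤ C)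
    (h : ∀ x y, x ⬝ᵥ A *ᵥ y ≤ C * √((x ⬝ᵥ x) * (y ⬝ᵥ y))) : opNorm A ≤ C := by
  refine ContinuousLinearMap.opNorm_le_of_re_inner_le hC fun y x hy hx ↦ ?_
  simpa [EuclideanSpace.inner_eq_star_dotProduct, dotProduct_self_eq_norm_sq, hx, hy]
    using h x.ofLp y.ofLp

lemma frobSq_mul_le (A : Matrix m n ℝ) (B : Matrix n κ ℝ) :
    frobSq (A * B) ≤ opNorm A ^ 2 * frobSq B := by
  simp only [frobSq_eq_sum_dotProduct, Finset.mul_sum]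
  exact Finset.sum_le_sum fun j _ ↦ dotProduct_mulVec_self_le A (Bᵀ j)

lemma abs_trace_transpose_mul_mul_le (A : Matrix m n ℝ) (F : Matrix m κ ℝ) (G : Matrix n κ ℝ) :
    |(Fᵀ * (A * G)).trace| ≤ opNorm A * √(frobSq F * frobSq G) :=
  calc |(Fᵀ * (A * G)).trace|
    _ ≤ √(frobSq F * frobSq (A * G)) := abs_trace_transpose_mul_le F (A * G)
    _ ≤ √(opNorm A ^ 2 * (frobSq F * frobSq G)) := by
        rw [mul_left_comm]
        gcongr
        exacts [frobSq_nonneg F, frobSq_mul_le A G]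
    _ = opNorm A * √(frobSq F * frobSq G) := by
        rw [Real.sqrt_mul (sq_nonneg _), Real.sqrt_sq (opNorm_nonneg A)]

lemma opNorm_le_sqrt_frobSq (A : Matrix m n ℝ) : opNorm A ≤ √(frobSq A) := by
  refine opNorm_le_of_dotProduct_mulVec_le (Real.sqrt_nonneg _) fun x y ↦ ?_
  calc x ⬝ᵥ A *ᵥ y
    _ = ((vecMulVec x y)ᵀ * A).trace := by
        rw [transpose_vecMulVec, vecMulVec_mul, trace_vecMulVec, dotProduct_mulVec,
          dotProduct_comm]
    _ ≤ √(frobSq (vecMulVec x y) * frobSq A) :=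
        (le_abs_self _).trans (abs_trace_transpose_mul_le _ A)
    _ = √(frobSq A) * √((x ⬝ᵥ x) * (y ⬝ᵥ y)) := by
        rw [frobSq_vecMulVec, mul_comm, Real.sqrt_mul (frobSq_nonneg A)]

lemma opNorm_hadamard_mul_transpose_le (A : Matrix m n ℝ)
    {Y : Matrix m κ ℝ} {V : Matrix n κ ℝ}
    (hY : ∀ i, (Y * Yᵀ) i i ≤ 1) (hV : ∀ j, (V * Vᵀ) j j ≤ 1) :
    opNorm (A ⊙ (Y * Vᵀ)) ≤ opNorm A := by
  classical
  refine opNorm_le_of_dotProduct_mulVec_le (opNorm_nonneg A) fun x y ↦ ?_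
  calc x ⬝ᵥ (A ⊙ (Y * Vᵀ)) *ᵥ y
    _ = ((diagonal x * Y)ᵀ * (A * (diagonal y * V))).trace := by
        rw [dotProduct_mulVec, dotProduct_vecMul_hadamard, transpose_mul, transpose_mul,
          transpose_mul, transpose_transpose, diagonal_transpose, diagonal_transpose,
          Matrix.mul_assoc Yᵀ, trace_mul_comm Yᵀ]
        simp only [Matrix.mul_assoc]
    _ ≤ opNorm A * √(frobSq (diagonal x * Y) * frobSq (diagonal y * V)) :=
        (le_abs_self _).trans (abs_trace_transpose_mul_mul_le A _ _)
    _ ≤ opNorm A * √((x ⬝ᵥ x) * (y ⬝ᵥ y)) := by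
        gcongr
        exacts [opNorm_nonneg A, frobSq_nonneg _, dotProduct_self_eq_norm_sq x ▸ sq_nonneg _,
          frobSq_diagonal_mul_le x hY, frobSq_diagonal_mul_le y hV]

end OperatorNorm

section GramDifference

variable {m κ l : Type*} [Fintype m] [Fintype κ] [Fintype l]

lemma trace_mul_mul_transpose {R : Type*} [CommSemiring R] (N : Matrix m m R) (F G : Matrix m κ R) :
    (N * (F * Gᵀ)).trace = (Gᵀ * (N * F)).trace := by
  rw [← Matrix.mul_assoc, trace_mul_comm]

lemma frobSq_sub_mul_of_transpose_mul_self [DecidableEq κ] {Q : Matrix m κ ℝ} {Y : Matrix m l ℝ}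
    {B : Matrix κ l ℝ} {μ : ℝ} (hQ : Qᵀ * Q = μ • 1) (hB : Qᵀ * Y = μ • B) :
    frobSq (Y - Q * B) = frobSq Y - μ * frobSq B := by
  have hYQ : Yᵀ * Q = μ • Bᵀ := by
    rw [← transpose_smul, ← hB, transpose_mul, transpose_transpose]
  have hexpand : (Y - Q * B)ᵀ * (Y - Q * B) = Yᵀ * Y - μ • (Bᵀ * B) := by
    rw [transpose_sub, transpose_mul, Matrix.sub_mul, Matrix.mul_sub, Matrix.mul_sub,
      ← Matrix.mul_assoc Yᵀ, hYQ, Matrix.mul_assoc Bᵀ, hB, Matrix.mul_assoc Bᵀ,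
      ← Matrix.mul_assoc Qᵀ, hQ]
    simp
  simp only [frobSq_eq_trace_transpose_mul, hexpand, trace_sub, trace_smul, smul_eq_mul]

lemma frobSq_mul_transpose_sub_le [DecidableEq l] {Q : Matrix m κ ℝ} {Y : Matrix m l ℝ}
    {B : Matrix κ l ℝ} {μ : ℝ} (hY : opNorm Y ^ 2 ≤ μ) (hB : Qᵀ * Y = μ • B) :
    frobSq (Y * Bᵀ - Q) ≤ frobSq Q - μ * frobSq B := by
  have hcross : (Qᵀ * (Y * Bᵀ)).trace = μ * frobSq B := by
    rw [← Matrix.mul_assoc, hB, smul_mul, trace_smul, frobSq_eq_trace, smul_eq_mul]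
  have hbound : frobSq (Y * Bᵀ) ≤ μ * frobSq B := by
    rw [← frobSq_transpose B]
    exact (frobSq_mul_le Y Bᵀ).trans (mul_le_mul_of_nonneg_right hY (frobSq_nonneg _))
  have hexpand : frobSq (Y * Bᵀ - Q)
      = frobSq (Y * Bᵀ) - 2 * (Qᵀ * (Y * Bᵀ)).trace + frobSq Q := by
    have hsymm : ((Y * Bᵀ)ᵀ * Q).trace = (Qᵀ * (Y * Bᵀ)).trace := by
      rw [← trace_transpose, transpose_mul, transpose_transpose]
    simp only [frobSq_eq_trace_transpose_mul, transpose_sub, Matrix.sub_mul, Matrix.mul_sub,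
      trace_sub, hsymm]
    ring
  linarith

lemma abs_trace_mul_gram_sub_gram_le [DecidableEq m] [DecidableEq κ] [DecidableEq l]
    (N : Matrix m m ℝ) {Q : Matrix m κ ℝ} {Y : Matrix m l ℝ} {μ : ℝ}
    (hμ : μ ≠ 0) (hQ : Qᵀ * Q = μ • 1) (hY : opNorm Y ^ 2 ≤ μ) (hQY : frobSq Q = frobSq Y) :
    |(N * (Y * Yᵀ - Q * Qᵀ)).trace|
      ≤ 2 * opNorm N * √(frobSq Y * (frobSq Y - frobSq (Qᵀ * Y) / μ)) := by
  -- `Q * B` is the orthogonal projection of `Y` onto the column space of `Q`.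
  set B : Matrix κ l ℝ := μ⁻¹ • (Qᵀ * Y) with hBdef
  have hB : Qᵀ * Y = μ • B := by rw [hBdef, smul_inv_smul₀ hμ]
  have hgap : frobSq Y - frobSq (Qᵀ * Y) / μ = frobSq Y - μ * frobSq B := by
    rw [hB, frobSq_smul]
    field_simp
  have hsplit : Y * Yᵀ - Q * Qᵀ = (Y - Q * B) * Yᵀ + Q * (Y * Bᵀ - Q)ᵀ := by
    simp only [transpose_sub, transpose_mul, transpose_transpose, Matrix.sub_mul, Matrix.mul_sub,
      Matrix.mul_assoc]
    abel
  calc |(N * (Y * Yᵀ - Q * Qᵀ)).trace|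
    _ ≤ |(Yᵀ * (N * (Y - Q * B))).trace| + |((Y * Bᵀ - Q)ᵀ * (N * Q)).trace| := by
        rw [hsplit, Matrix.mul_add, trace_add, trace_mul_mul_transpose, trace_mul_mul_transpose]
        exact abs_add_le _ _
    _ ≤ opNorm N * √(frobSq Y * frobSq (Y - Q * B))
          + opNorm N * √(frobSq (Y * Bᵀ - Q) * frobSq Q) :=
        add_le_add (abs_trace_transpose_mul_mul_le N _ _) (abs_trace_transpose_mul_mul_le N _ _)
    _ ≤ opNorm N * √(frobSq Y * (frobSq Y - μ * frobSq B))
          + opNorm N * √((frobSq Y - μ * frobSq B) * frobSq Y) := by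
        rw [frobSq_sub_mul_of_transpose_mul_self hQ hB, hQY]
        gcongr
        exacts [opNorm_nonneg N, frobSq_nonneg Y, hQY ▸ frobSq_mul_transpose_sub_le hY hB]
    _ = 2 * opNorm N * √(frobSq Y * (frobSq Y - frobSq (Qᵀ * Y) / μ)) := by
        rw [hgap, mul_comm (frobSq Y - _)]
        ring

lemma abs_trace_mul_gram_sub_const_le [DecidableEq m] [Nonempty m]
    (N : Matrix m m ℝ) {V : Matrix m κ ℝ} {ρ : ℝ} (hρ : 0 < ρ) (hV : ∀ i, (V * Vᵀ) i i = ρ) :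
    |(N * (V * Vᵀ - of fun _ _ ↦ ρ)).trace| ≤ 2 * opNorm N * √(Fintype.card m * ρ
      * (Fintype.card m * ρ - (∑ k, (∑ i, V i k) ^ 2) / Fintype.card m)) := by
  classical
  have hm : (Fintype.card m : ℝ) ≠ 0 := by exact_mod_cast Fintype.card_ne_zero
  set Q : Matrix m Unit ℝ := of fun _ _ ↦ √ρ with hQdef
  have hQQ : Q * Qᵀ = of fun _ _ ↦ ρ := by
    ext i j
    simp [hQdef, mul_apply, hρ.le]
  have hQ : Qᵀ * Q = (Fintype.card m * ρ) • 1 := by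
    ext
    simp [hQdef, mul_apply, hρ.le]
  have hfrobV : frobSq V = Fintype.card m * ρ := by
    simp [frobSq_eq_trace, trace, hV]
  have hfrobQ : frobSq Q = frobSq V := by
    rw [hfrobV, frobSq_eq_trace, hQQ]
    simp [trace]
  have hnorm : opNorm V ^ 2 ≤ Fintype.card m * ρ := by
    rw [← hfrobV]
    exact (Real.le_sqrt (opNorm_nonneg V) (frobSq_nonneg V)).1 (opNorm_le_sqrt_frobSq V)
  have hfrobQV : frobSq (Qᵀ * V) = ρ * ∑ k, (∑ i, V i k) ^ 2 := by
    simp [frobSq, hQdef, mul_apply, ← Finset.mul_sum, mul_pow, hρ.le]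
  have hbound := abs_trace_mul_gram_sub_gram_le N (mul_ne_zero hm hρ.ne') hQ hnorm hfrobQ
  rwa [hQQ, hfrobV, hfrobQV, mul_comm _ ρ, mul_div_mul_left _ _ hρ.ne', mul_comm ρ] at hbound

end GramDifference

section Laplacian

/-- The Laplacian of a connected graph with nonnegative edge weights `-L i j`. Connectedness is
encoded as: only constant vectors have zero Dirichlet energy. -/
structure IsConnectedLaplacian {ι : Type*} [Fintype ι] (L : Matrix ι ι ℝ) : Prop where
  isSymm : L.IsSymm
  mulVec_one : L *ᵥ 1 = 0
  nonpos_of_ne : ∀ {i j}, i ≠ j → L i j ≤ 0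
  eq_of_dotProduct_mulVec_eq_zero : ∀ {x : ι → ℝ}, x ⬝ᵥ L *ᵥ x = 0 → ∀ i j, x i = x j

lemma isConnectedLaplacian_lapMatrix {V : Type*} [Fintype V] [DecidableEq V]
    {G : SimpleGraph V} [DecidableRel G.Adj] (hG : G.Connected) :
    IsConnectedLaplacian (G.lapMatrix ℝ) where
  isSymm := G.isSymm_lapMatrix ℝ
  mulVec_one := G.lapMatrix_mulVec_const_eq_zero
  nonpos_of_ne {i j} hij := by
    simp only [SimpleGraph.lapMatrix, SimpleGraph.degMatrix, Matrix.sub_apply,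
      diagonal_apply_ne _ hij, SimpleGraph.adjMatrix_apply, zero_sub, Left.neg_nonpos_iff]
    positivity
  eq_of_dotProduct_mulVec_eq_zero {x} hx i j := by
    rw [← toLinearMap₂'_apply'] at hx
    exact (G.lapMatrix_toLinearMap₂'_apply'_eq_zero_iff_forall_reachable x).1 hx i j
      (hG.preconnected i j)

namespace IsConnectedLaplacian

variable {ι : Type*} [Fintype ι] {L : Matrix ι ι ℝ}

lemma sum_row (hL : IsConnectedLaplacian L) (i : ι) : ∑ j, L i j = 0 := by
  simpa [mulVec, dotProduct] using congrFun hL.mulVec_one i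

lemma sum_mul_left (hL : IsConnectedLaplacian L) (f : ι → ℝ) : ∑ i, ∑ j, L i j * f i = 0 := by
  simp only [← Finset.sum_mul, hL.sum_row, zero_mul, Finset.sum_const_zero]

lemma sum_mul_right (hL : IsConnectedLaplacian L) (f : ι → ℝ) : ∑ i, ∑ j, L i j * f j = 0 := by
  rw [Finset.sum_comm, ← hL.sum_mul_left f]
  simp only [hL.isSymm.apply]

lemma two_mul_dotProduct_mulVec (hL : IsConnectedLaplacian L) (x : ι → ℝ) :
    2 * (x ⬝ᵥ L *ᵥ x) = ∑ i, ∑ j, -L i j * (x i - x j) ^ 2 := by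
  have hexpand : ∑ i, ∑ j, -L i j * (x i - x j) ^ 2
      = 2 * (x ⬝ᵥ L *ᵥ x) - ∑ i, ∑ j, L i j * x i ^ 2 - ∑ i, ∑ j, L i j * x j ^ 2 := by
    simp only [dotProduct, mulVec, Finset.mul_sum, ← Finset.sum_sub_distrib]
    exact Finset.sum_congr rfl fun i _ ↦ Finset.sum_congr rfl fun j _ ↦ by ring
  rw [hexpand, hL.sum_mul_left, hL.sum_mul_right, sub_zero, sub_zero]

lemma sum_mul_nonpos_of_diag_eq_zero (hL : IsConnectedLaplacian L) {f : ι → ι → ℝ}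
    (hdiag : ∀ i, f i i = 0) (hf : ∀ i j, 0 ≤ f i j) : ∑ i, ∑ j, L i j * f i j ≤ 0 := by
  refine Finset.sum_nonpos fun i _ ↦ Finset.sum_nonpos fun j _ ↦ ?_
  obtain rfl | hij := eq_or_ne i j
  · rw [hdiag, mul_zero]
  · exact mul_nonpos_of_nonpos_of_nonneg (hL.nonpos_of_ne hij) (hf i j)

lemma trace_mul_const (hL : IsConnectedLaplacian L) (c : ℝ) :
    (L * of fun _ _ ↦ c).trace = 0 := by
  simp only [trace, diag_apply, mul_apply, of_apply, hL.sum_mul_left fun _ ↦ c]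

lemma trace_mul_hadamard_self_le (hL : IsConnectedLaplacian L) {T : Matrix ι ι ℝ} {c : ℝ}
    (hT : ∀ i, T i i = c) : (L * (T ⊙ T)).trace ≤ 2 * c * (L * T).trace := by
  have hnonpos := hL.sum_mul_nonpos_of_diag_eq_zero (f := fun i j ↦ (T j i - c) ^ 2)
    (by simp [hT]) (fun _ _ ↦ sq_nonneg _)
  have hexpand : ∑ i, ∑ j, L i j * (T j i - c) ^ 2
      = (L * (T ⊙ T)).trace - 2 * c * (L * T).trace + ∑ i, ∑ j, L i j * c ^ 2 := by
    simp only [trace, diag_apply, mul_apply, hadamard_apply, Finset.mul_sum,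
      ← Finset.sum_sub_distrib, ← Finset.sum_add_distrib]
    exact Finset.sum_congr rfl fun i _ ↦ Finset.sum_congr rfl fun j _ ↦ by ring
  rw [hexpand, hL.sum_mul_left fun _ ↦ c ^ 2] at hnonpos
  linarith

lemma dotProduct_mulVec_nonneg (hL : IsConnectedLaplacian L) (x : ι → ℝ) :
    0 ≤ x ⬝ᵥ L *ᵥ x := by
  have hnonpos := hL.sum_mul_nonpos_of_diag_eq_zero (f := fun i j ↦ (x i - x j) ^ 2)
    (by simp) (fun _ _ ↦ sq_nonneg _)
  have hform := hL.two_mul_dotProduct_mulVec x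
  simp only [neg_mul, Finset.sum_neg_distrib] at hform
  linarith

end IsConnectedLaplacian

/-- The unit vectors orthogonal to the all-ones vector, over which the infimum `lam2` is taken. -/
def meanZeroSphere (n : ℕ) : Set (Fin n → ℝ) :=
  {x | ∑ i, x i = 0 ∧ ∑ i, x i ^ 2 = 1}

variable {n : ℕ}

lemma isCompact_meanZeroSphere : IsCompact (meanZeroSphere n) := by
  refine (isCompact_Icc (a := (-1 : Fin n → ℝ)) (b := 1)).of_isClosed_subset ?_ ?_
  · exact (isClosed_eq (by fun_prop) continuous_const).inter
      (isClosed_eq (by fun_prop) continuous_const)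
  · intro x hx
    have hcoord (i : Fin n) : |x i| ≤ 1 := by
      rw [← sq_le_one_iff_abs_le_one, ← hx.2]
      exact Finset.single_le_sum (fun j _ ↦ sq_nonneg (x j)) (Finset.mem_univ i)
    exact ⟨fun i ↦ (abs_le.1 (hcoord i)).1, fun i ↦ (abs_le.1 (hcoord i)).2⟩

lemma smul_mem_meanZeroSphere {x : Fin n → ℝ} (hx : x ≠ 0) (hsum : ∑ i, x i = 0) :
    (√(x ⬝ᵥ x))⁻¹ • x ∈ meanZeroSphere n := by
  have hpos : x ⬝ᵥ x ≠ 0 := mt dotProduct_self_eq_zero.1 hx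
  constructor
  · simp only [Pi.smul_apply, smul_eq_mul, ← Finset.mul_sum, hsum, mul_zero]
  · simp only [Pi.smul_apply, smul_eq_mul, mul_pow, ← Finset.mul_sum, inv_pow,
      Real.sq_sqrt (dotProduct_self_eq_norm_sq x ▸ sq_nonneg _)]
    simp only [sq]
    exact inv_mul_cancel₀ hpos

lemma meanZeroSphere_nonempty (hn : 2 ≤ n) : (meanZeroSphere n).Nonempty := by
  let a : Fin n := ⟨0, by lia⟩
  let b : Fin n := ⟨1, by lia⟩
  have hab : a ≠ b := by simp [a, b]
  refine ⟨_, smul_mem_meanZeroSphere (x := Pi.single a 1 - Pi.single b 1) (fun h ↦ ?_) ?_⟩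
  · simpa [hab] using congrFun h a
  · simp

lemma lam2_eq_sInf_image (L : Matrix (Fin n) (Fin n) ℝ) :
    lam2 L = sInf ((fun x ↦ x ⬝ᵥ L *ᵥ x) '' meanZeroSphere n) := by
  refine congrArg sInf (Set.ext fun t ↦ ⟨?_, ?_⟩)
  · rintro ⟨x, hsum, hsq, rfl⟩
    exact ⟨x, ⟨hsum, hsq⟩, rfl⟩
  · rintro ⟨x, ⟨hsum, hsq⟩, rfl⟩
    exact ⟨x, hsum, hsq, rfl⟩

variable {L : Matrix (Fin n) (Fin n) ℝ}

lemma isCompact_image_meanZeroSphere (L : Matrix (Fin n) (Fin n) ℝ) :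
    IsCompact ((fun x ↦ x ⬝ᵥ L *ᵥ x) '' meanZeroSphere n) :=
  isCompact_meanZeroSphere.image (by fun_prop)

lemma lam2_le {x : Fin n → ℝ} (hx : x ∈ meanZeroSphere n) : lam2 L ≤ x ⬝ᵥ L *ᵥ x := by
  rw [lam2_eq_sInf_image]
  exact csInf_le (isCompact_image_meanZeroSphere L).bddBelow (Set.mem_image_of_mem _ hx)

lemma exists_lam2_eq (hn : 2 ≤ n) (L : Matrix (Fin n) (Fin n) ℝ) :
    ∃ x ∈ meanZeroSphere n, x ⬝ᵥ L *ᵥ x = lam2 L := by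
  rw [lam2_eq_sInf_image]
  exact (isCompact_image_meanZeroSphere L).sInf_mem ((meanZeroSphere_nonempty hn).image _)

lemma lam2_mul_dotProduct_self_le {x : Fin n → ℝ} (hsum : ∑ i, x i = 0) :
    lam2 L * (x ⬝ᵥ x) ≤ x ⬝ᵥ L *ᵥ x := by
  obtain rfl | hx := eq_or_ne x 0
  · simp
  have hpos : 0 < x ⬝ᵥ x :=
    (dotProduct_self_eq_norm_sq x ▸ sq_nonneg _).lt_of_ne' (mt dotProduct_self_eq_zero.1 hx)
  have hle := lam2_le (L := L) (smul_mem_meanZeroSphere hx hsum)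
  rw [mulVec_smul, smul_dotProduct, dotProduct_smul, smul_eq_mul, smul_eq_mul, ← mul_assoc,
    ← mul_inv, Real.mul_self_sqrt hpos.le, ← div_eq_inv_mul, le_div_iff₀ hpos] at hle
  exact hle

namespace IsConnectedLaplacian

variable {κ : Type*} [Fintype κ]

lemma lam2_pos (hL : IsConnectedLaplacian L) (hn : 2 ≤ n) : 0 < lam2 L := by
  obtain ⟨x, ⟨hsum, hsq⟩, hx⟩ := exists_lam2_eq hn L
  rw [← hx]
  refine (hL.dotProduct_mulVec_nonneg x).lt_of_ne' fun hzero ↦ ?_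
  have hconst := hL.eq_of_dotProduct_mulVec_eq_zero hzero
  have hx_zero (i : Fin n) : x i = 0 := by
    simpa [hconst _ i, show n ≠ 0 by lia] using hsum
  simp [hx_zero] at hsq

lemma lam2_mul_dotProduct_self_sub_le (hL : IsConnectedLaplacian L) (x : Fin n → ℝ) :
    lam2 L * (x ⬝ᵥ x - (∑ i, x i) ^ 2 / n) ≤ x ⬝ᵥ L *ᵥ x := by
  obtain rfl | hn := eq_or_ne n 0
  · simp
  have hn' : (n : ℝ) ≠ 0 := by exact_mod_cast hn
  set c : ℝ := (∑ i, x i) / n with hc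
  set y : Fin n → ℝ := x - c • 1 with hy
  have hsum : ∑ i, y i = 0 := by
    simp only [hy, Pi.sub_apply, Pi.smul_apply, Pi.one_apply, smul_eq_mul, mul_one,
      Finset.sum_sub_distrib, Finset.sum_const, Finset.card_univ, Fintype.card_fin,
      nsmul_eq_mul, hc]
    field_simp
    ring
  have hself : y ⬝ᵥ y = x ⬝ᵥ x - (∑ i, x i) ^ 2 / n := by
    calc y ⬝ᵥ y
      _ = x ⬝ᵥ x - c * ∑ i, x i - c * ∑ i, y i := by
          simp only [hy, sub_dotProduct, dotProduct_sub, smul_dotProduct, dotProduct_smul,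
            dotProduct_one, one_dotProduct, smul_eq_mul]
      _ = x ⬝ᵥ x - (∑ i, x i) ^ 2 / n := by
          rw [hsum, hc]
          ring
  have hone : (1 : Fin n → ℝ) ⬝ᵥ L *ᵥ x = 0 := by
    rw [dotProduct_mulVec, ← mulVec_transpose, hL.isSymm.eq, hL.mulVec_one, zero_dotProduct]
  have henergy : y ⬝ᵥ L *ᵥ y = x ⬝ᵥ L *ᵥ x := by
    rw [hy, mulVec_sub, mulVec_smul, hL.mulVec_one, smul_zero, sub_zero, sub_dotProduct,
      smul_dotProduct, hone, smul_zero, sub_zero]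
  rw [← hself, ← henergy]
  exact lam2_mul_dotProduct_self_le hsum

lemma lam2_mul_frobSq_sub_le (hL : IsConnectedLaplacian L) (U : Matrix (Fin n) κ ℝ) :
    lam2 L * (frobSq U - (∑ k, (∑ i, U i k) ^ 2) / n) ≤ (L * (U * Uᵀ)).trace := by
  rw [trace_mul_mul_transpose, frobSq_eq_sum_dotProduct, Finset.sum_div,
    ← Finset.sum_sub_distrib, Finset.mul_sum]
  exact Finset.sum_le_sum fun k _ ↦ hL.lam2_mul_dotProduct_self_sub_le (Uᵀ k)

end IsConnectedLaplacian

end Laplacian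

section Blocks

variable {n r k p : ℕ}

lemma submatrix_prodMk_mul_transpose (A B : Matrix (Fin n × Fin r) (Fin p) ℝ) (i j : Fin n) :
    (A * Bᵀ).submatrix (Prod.mk i) (Prod.mk j) = blk A i * (blk B j)ᵀ :=
  rfl

lemma ext_submatrix_prodMk {ι κ R : Type*} {E F : Matrix (ι × κ) (ι × κ) R}
    (h : ∀ i j, E.submatrix (Prod.mk i) (Prod.mk j) = F.submatrix (Prod.mk i) (Prod.mk j)) :
    E = F :=
  Matrix.ext fun q q' ↦ congrFun₂ (h q.1 q'.1) q.2 q'.2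

lemma trace_SBD_mul {E : Matrix (Fin n × Fin r) (Fin n × Fin r) ℝ} {c : ℝ}
    (hE : ∀ i, E.submatrix (Prod.mk i) (Prod.mk i) = c • 1)
    (M : Matrix (Fin n × Fin r) (Fin n × Fin r) ℝ) : (SBD M * E).trace = c * M.trace := by
  have hterm (q q' : Fin n × Fin r) : SBD M q q' * E q' q = if q = q' then c * M q q else 0 := by
    obtain ⟨i, a⟩ := q
    obtain ⟨j, b⟩ := q'
    obtain rfl | hij := eq_or_ne i j
    · have hEab : E (i, b) (i, a) = if b = a then c else 0 := by
        simpa [Matrix.one_apply] using congrFun₂ (hE i) b a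
      obtain rfl | hab := eq_or_ne a b
      · simp [SBD, hEab, mul_comm]
      · simp [SBD, hEab, hab, hab.symm]
    · simp [SBD, hij]
  simp only [trace, diag_apply, mul_apply, hterm, Finset.sum_ite_eq, Finset.mem_univ, if_true,
    Finset.mul_sum]

namespace Feasible

variable {Y : Matrix (Fin n × Fin r) (Fin p) ℝ}

lemma diag_mul_transpose (hY : Feasible Y) (q : Fin n × Fin r) : (Y * Yᵀ) q q = 1 := by
  simpa [← submatrix_prodMk_mul_transpose] using congrFun₂ (hY q.1) q.2 q.2

lemma frobSq_eq (hY : Feasible Y) : frobSq Y = n * r := by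
  simp [frobSq_eq_trace, trace, hY.diag_mul_transpose]

lemma blk_transpose_mul_blk {Z : Matrix (Fin n × Fin r) (Fin r) ℝ} (hZ : Feasible Z) (i : Fin n) :
    (blk Z i)ᵀ * blk Z i = 1 :=
  mul_eq_one_comm.1 (hZ i)

end Feasible

lemma transpose_mul_eq_sum_blk (Z : Matrix (Fin n × Fin r) (Fin k) ℝ)
    (Y : Matrix (Fin n × Fin r) (Fin p) ℝ) : Zᵀ * Y = ∑ i, (blk Z i)ᵀ * blk Y i := by
  ext a b
  simp only [mul_apply, Matrix.sum_apply, Fintype.sum_prod_type]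
  rfl

lemma Feasible.transpose_mul_self {Z : Matrix (Fin n × Fin r) (Fin r) ℝ} (hZ : Feasible Z) :
    Zᵀ * Z = (n : ℝ) • 1 := by
  simp [transpose_mul_eq_sum_blk, hZ.blk_transpose_mul_blk, ← Nat.cast_smul_eq_nsmul ℝ]

open scoped Matrix.Norms.L2Operator in
lemma Feasible.opNorm_sq_le {Y : Matrix (Fin n × Fin r) (Fin p) ℝ} (hY : Feasible Y) :
    opNorm Y ^ 2 ≤ n := by
  have hblk (i : Fin n) : ‖(blk Y i)ᵀ * blk Y i‖ ≤ 1 := by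
    have hnorm := l2_opNorm_conjTranspose_mul_self (blk Y i)ᵀ
    rw [conjTranspose_eq_transpose_of_trivial, transpose_transpose, hY i] at hnorm
    rw [← conjTranspose_eq_transpose_of_trivial, l2_opNorm_conjTranspose_mul_self,
      ← l2_opNorm_conjTranspose, conjTranspose_eq_transpose_of_trivial, ← hnorm, ← diagonal_one,
      l2_opNorm_diagonal]
    exact (pi_norm_le_iff_of_nonneg zero_le_one).2 (by simp)
  calc opNorm Y ^ 2
    _ = ‖Yᵀ * Y‖ := by
        rw [opNorm_eq_norm, sq, ← l2_opNorm_conjTranspose_mul_self,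
          conjTranspose_eq_transpose_of_trivial]
    _ ≤ ∑ i, ‖(blk Y i)ᵀ * blk Y i‖ := by
        rw [transpose_mul_eq_sum_blk]
        exact norm_sum_le _ _
    _ ≤ n := by
        simpa using Finset.sum_le_sum fun i (_ : i ∈ Finset.univ) ↦ hblk i

/-- The row-blocks `Z_iᵀ Y_i` of `Y` read in the frames of `Z`, each flattened to one row of a
matrix, so that `aligned Z Y * (aligned Z Y)ᵀ` collects their pairwise inner products. -/
def aligned (Z : Matrix (Fin n × Fin r) (Fin k) ℝ) (Y : Matrix (Fin n × Fin r) (Fin p) ℝ) :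
    Matrix (Fin n) (Fin k × Fin p) ℝ :=
  Matrix.of fun i q => ((blk Z i)ᵀ * blk Y i) q.1 q.2

section Aligned

variable (Z : Matrix (Fin n × Fin r) (Fin k) ℝ) (Y : Matrix (Fin n × Fin r) (Fin p) ℝ)

lemma aligned_mul_transpose_apply (i j : Fin n) :
    (aligned Z Y * (aligned Z Y)ᵀ) i j
      = ((blk Z i)ᵀ * blk Y i * ((blk Z j)ᵀ * blk Y j)ᵀ).trace := by
  rw [← sum_hadamard_eq, mul_apply, Fintype.sum_prod_type]
  rfl

lemma aligned_mul_transpose_apply' (i j : Fin n) :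
    (aligned Z Y * (aligned Z Y)ᵀ) i j
      = ((blk Z i * (blk Z j)ᵀ) * (blk Y j * (blk Y i)ᵀ)).trace := by
  rw [aligned_mul_transpose_apply, ← trace_transpose]
  simp only [transpose_mul, transpose_transpose, Matrix.mul_assoc]
  rw [trace_mul_comm (blk Z i)]
  simp only [Matrix.mul_assoc]

lemma sum_sum_aligned_sq :
    ∑ q, (∑ i, aligned Z Y i q) ^ 2 = frobSq (Zᵀ * Y) := by
  simp only [frobSq, transpose_mul_eq_sum_blk, Fintype.sum_prod_type, Matrix.sum_apply]
  rfl

variable {Z Y}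

lemma Feasible.aligned_mul_transpose_diag (hZ : Feasible Z) (hY : Feasible Y) (i : Fin n) :
    (aligned Z Y * (aligned Z Y)ᵀ) i i = r := by
  rw [aligned_mul_transpose_apply', hZ i, hY i, Matrix.mul_one, trace_one, Fintype.card_fin]

lemma Feasible.frobSq_aligned (hZ : Feasible Z) (hY : Feasible Y) :
    frobSq (aligned Z Y) = n * r := by
  simp [frobSq_eq_trace, trace, hZ.aligned_mul_transpose_diag hY]

end Aligned

lemma Feasible.aligned_self_mul_transpose {Z : Matrix (Fin n × Fin r) (Fin r) ℝ}
    (hZ : Feasible Z) : aligned Z Z * (aligned Z Z)ᵀ = of fun _ _ ↦ (r : ℝ) := by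
  ext i j
  rw [aligned_mul_transpose_apply, hZ.blk_transpose_mul_blk, hZ.blk_transpose_mul_blk,
    transpose_one, Matrix.mul_one, trace_one, Fintype.card_fin, of_apply]

end Blocks

section TangentDirections

variable {n r k p : ℕ}

lemma sum_single_mul_mul_single {l m R : Type*} [Semiring R] [Fintype l] [Fintype m]
    [DecidableEq l] [DecidableEq m] (C : Matrix m l R) :
    ∑ a, ∑ b, (single a b 1 : Matrix l m R) * C * (single a b 1 : Matrix l m R) = Cᵀ := by
  rw [matrix_eq_sum_single Cᵀ]
  simp only [single_mul_mul_single, transpose_apply, one_mul, mul_one]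

lemma sum_single_mul_mul_single_swap {l m R : Type*} [Semiring R] [Fintype l] [Fintype m]
    [DecidableEq l] [DecidableEq m] (C : Matrix m m R) :
    ∑ a, ∑ b, (single a b 1 : Matrix l m R) * C * (single b a 1 : Matrix m l R)
      = C.trace • (1 : Matrix l l R) := by
  have hterm (a : l) (b : m) : (single a b 1 : Matrix l m R) * C * (single b a 1 : Matrix m l R)
      = C b b • single a a 1 := by
    rw [single_mul_mul_single, one_mul, smul_single, smul_eq_mul]
  simp only [hterm, ← Finset.sum_smul, ← Finset.smul_sum, sum_single_one]
  rfl

/-- Tangency to the feasible set at `Y`: the linearisation of `Y_i Y_iᵀ = 1` in every block. -/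
def IsTangent (Y Ydot : Matrix (Fin n × Fin r) (Fin p) ℝ) : Prop :=
  ∀ i, blk Ydot i * (blk Y i)ᵀ + blk Y i * (blk Ydot i)ᵀ = 0

/-- The tangent direction at `Y` with blocks `Z_i M - Y_i (Z_i M)ᵀ Y_i`, which moves every `Y_i`
towards the corresponding block of `Z M`. -/
def tangentDir (Z : Matrix (Fin n × Fin r) (Fin k) ℝ) (Y : Matrix (Fin n × Fin r) (Fin p) ℝ)
    (M : Matrix (Fin k) (Fin p) ℝ) : Matrix (Fin n × Fin r) (Fin p) ℝ :=
  Matrix.of fun q b => (blk Z q.1 * M - blk Y q.1 * (blk Z q.1 * M)ᵀ * blk Y q.1) q.2 b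

/-- The sum of `Ẏ Ẏᵀ` over the tangent directions `Ẏ = tangentDir Z Y M`, with `M` ranging over
the standard basis of `ℝ^{k × p}`. -/
def tangentDirGram (Z : Matrix (Fin n × Fin r) (Fin k) ℝ)
    (Y : Matrix (Fin n × Fin r) (Fin p) ℝ) : Matrix (Fin n × Fin r) (Fin n × Fin r) ℝ :=
  ∑ a, ∑ b, tangentDir Z Y (single a b 1) * (tangentDir Z Y (single a b 1))ᵀ

lemma blk_tangentDir (Z : Matrix (Fin n × Fin r) (Fin k) ℝ)
    (Y : Matrix (Fin n × Fin r) (Fin p) ℝ) (M : Matrix (Fin k) (Fin p) ℝ) (i : Fin n) :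
    blk (tangentDir Z Y M) i = blk Z i * M - blk Y i * (blk Z i * M)ᵀ * blk Y i :=
  rfl

lemma blk_tangentDir_mul_transpose (Z : Matrix (Fin n × Fin r) (Fin k) ℝ)
    (Y : Matrix (Fin n × Fin r) (Fin p) ℝ) (M : Matrix (Fin k) (Fin p) ℝ) (i j : Fin n) :
    blk (tangentDir Z Y M) i * (blk (tangentDir Z Y M) j)ᵀ
      = blk Z i * (M * (1 : Matrix (Fin p) (Fin p) ℝ) * Mᵀ) * (blk Z j)ᵀ
        - blk Z i * (M * ((blk Y j)ᵀ * blk Z j) * M) * (blk Y j)ᵀ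
        - blk Y i * (Mᵀ * ((blk Z i)ᵀ * blk Y i) * Mᵀ) * (blk Z j)ᵀ
        + blk Y i * (Mᵀ * ((blk Z i)ᵀ * blk Y i * ((blk Z j)ᵀ * blk Y j)ᵀ) * M)
          * (blk Y j)ᵀ := by
  simp only [blk_tangentDir, transpose_sub, transpose_mul, transpose_transpose, Matrix.sub_mul,
    Matrix.mul_sub, Matrix.mul_assoc, Matrix.one_mul]
  abel

lemma submatrix_tangentDirGram (Z : Matrix (Fin n × Fin r) (Fin k) ℝ)
    (Y : Matrix (Fin n × Fin r) (Fin p) ℝ) (i j : Fin n) :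
    (tangentDirGram Z Y).submatrix (Prod.mk i) (Prod.mk j)
      = (p : ℝ) • (blk Z i * (blk Z j)ᵀ)
        - blk Z i * ((blk Z j)ᵀ * blk Y j) * (blk Y j)ᵀ
        - blk Y i * ((blk Y i)ᵀ * blk Z i) * (blk Z j)ᵀ
        + (aligned Z Y * (aligned Z Y)ᵀ) i j • (blk Y i * (blk Y j)ᵀ) := by
  have hsum : (tangentDirGram Z Y).submatrix (Prod.mk i) (Prod.mk j)
      = ∑ a, ∑ b, blk (tangentDir Z Y (single a b 1)) i
          * (blk (tangentDir Z Y (single a b 1)) j)ᵀ := by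
    ext a b
    simp only [tangentDirGram, submatrix_apply, Matrix.sum_apply]
    rfl
  have hself (C : Matrix (Fin k) (Fin p) ℝ) :
      ∑ a : Fin k, ∑ b : Fin p, (single b a 1 : Matrix (Fin p) (Fin k) ℝ) * C
        * (single b a 1 : Matrix (Fin p) (Fin k) ℝ) = Cᵀ :=
    Finset.sum_comm.trans (sum_single_mul_mul_single C)
  have hswap (C : Matrix (Fin k) (Fin k) ℝ) :
      ∑ a : Fin k, ∑ b : Fin p, (single b a 1 : Matrix (Fin p) (Fin k) ℝ) * C
        * (single a b 1 : Matrix (Fin k) (Fin p) ℝ) = C.trace • (1 : Matrix (Fin p) (Fin p) ℝ) :=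
    Finset.sum_comm.trans (sum_single_mul_mul_single_swap C)
  simp only [hsum, blk_tangentDir_mul_transpose, transpose_single, Finset.sum_add_distrib,
    Finset.sum_sub_distrib, ← Matrix.mul_sum, ← Matrix.sum_mul, sum_single_mul_mul_single,
    sum_single_mul_mul_single_swap, hself, hswap, ← aligned_mul_transpose_apply]
  simp

namespace Feasible

variable {Y : Matrix (Fin n × Fin r) (Fin p) ℝ}

lemma isTangent_tangentDir (hY : Feasible Y) (Z : Matrix (Fin n × Fin r) (Fin k) ℝ)
    (M : Matrix (Fin k) (Fin p) ℝ) : IsTangent Y (tangentDir Z Y M) := by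
  intro i
  simp only [blk_tangentDir, transpose_sub, transpose_mul, transpose_transpose, Matrix.sub_mul,
    Matrix.mul_sub, Matrix.mul_assoc, hY i, Matrix.mul_one]
  simp only [← Matrix.mul_assoc, hY i, Matrix.one_mul]
  abel

lemma tangentDirGram_eq (hY : Feasible Y) (Z : Matrix (Fin n × Fin r) (Fin k) ℝ) :
    tangentDirGram Z Y = ((p : ℝ) - 2) • (Z * Zᵀ)
      + (aligned Z Y * (aligned Z Y)ᵀ).submatrix Prod.fst Prod.fst ⊙ (Y * Yᵀ) := by
  refine ext_submatrix_prodMk fun i j ↦ ?_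
  have hZ : blk Z i * ((blk Z j)ᵀ * blk Y j) * (blk Y j)ᵀ = blk Z i * (blk Z j)ᵀ := by
    rw [Matrix.mul_assoc, Matrix.mul_assoc, hY j, Matrix.mul_one]
  have hY' : blk Y i * ((blk Y i)ᵀ * blk Z i) * (blk Z j)ᵀ = blk Z i * (blk Z j)ᵀ := by
    rw [← Matrix.mul_assoc (blk Y i), hY i, Matrix.one_mul]
  rw [submatrix_tangentDirGram, hZ, hY']
  have hrhs : (((p : ℝ) - 2) • (Z * Zᵀ) + (aligned Z Y * (aligned Z Y)ᵀ).submatrix Prod.fst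
      Prod.fst ⊙ (Y * Yᵀ)).submatrix (Prod.mk i) (Prod.mk j)
      = ((p : ℝ) - 2) • (blk Z i * (blk Z j)ᵀ)
        + (aligned Z Y * (aligned Z Y)ᵀ) i j • (blk Y i * (blk Y j)ᵀ) :=
    rfl
  rw [hrhs]
  module

lemma submatrix_tangentDirGram_self (hY : Feasible Y) {Z : Matrix (Fin n × Fin r) (Fin k) ℝ}
    (hZ : Feasible Z) (i : Fin n) :
    (tangentDirGram Z Y).submatrix (Prod.mk i) (Prod.mk i) = ((p : ℝ) + r - 2) • 1 := by
  rw [submatrix_tangentDirGram, hZ.aligned_mul_transpose_diag hY, ← Matrix.mul_assoc,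
    ← Matrix.mul_assoc, hZ i, hY i, Matrix.one_mul, hY i, Matrix.one_mul, hZ i]
  module

end Feasible

variable {Z : Matrix (Fin n × Fin r) (Fin k) ℝ} {Y : Matrix (Fin n × Fin r) (Fin p) ℝ}
  {C : Matrix (Fin n × Fin r) (Fin n × Fin r) ℝ}

lemma trace_mul_gram_le_trace_mul_tangentDirGram (hZ : Feasible Z) (hY : Feasible Y)
    (hcrit : ∀ Ydot, IsTangent Y Ydot → 0 ≤ (Smat C Y * Ydot * Ydotᵀ).trace) :
    ((p : ℝ) + r - 2) * (C * (Y * Yᵀ)).trace ≤ (C * tangentDirGram Z Y).trace := by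
  have hnonneg : 0 ≤ (Smat C Y * tangentDirGram Z Y).trace := by
    simp only [tangentDirGram, Matrix.mul_sum, trace_sum, ← Matrix.mul_assoc]
    exact Finset.sum_nonneg fun a _ ↦ Finset.sum_nonneg fun b _ ↦
      hcrit _ (hY.isTangent_tangentDir Z _)
  rw [Smat, Matrix.sub_mul, trace_sub, trace_SBD_mul (hY.submatrix_tangentDirGram_self hZ),
    Matrix.mul_assoc] at hnonneg
  linarith

end TangentDirections

section CostMatrix

variable {n r p : ℕ} {L : Matrix (Fin n) (Fin n) ℝ} {Zb : Fin n → Matrix (Fin r) (Fin r) ℝ}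
  {Y : Matrix (Fin n × Fin r) (Fin p) ℝ}

lemma LZmat_eq_hadamard (L : Matrix (Fin n) (Fin n) ℝ) (Zb : Fin n → Matrix (Fin r) (Fin r) ℝ) :
    LZmat L Zb = L.submatrix Prod.fst Prod.fst ⊙ (Zstack Zb * (Zstack Zb)ᵀ) := by
  ext ⟨i, a⟩ ⟨j, b⟩
  simp only [LZmat, Dmat, Zstack, mul_apply, of_apply, transpose_apply, kroneckerMap_apply,
    one_apply, hadamard_apply, submatrix_apply, Fintype.sum_prod_type, Finset.mul_sum, ite_mul,
    zero_mul, mul_ite, mul_one, mul_zero, Finset.sum_ite_irrel, Finset.sum_ite_eq,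
    Finset.sum_ite_eq', Finset.sum_const_zero, Finset.mem_univ, if_true]
  exact Finset.sum_congr rfl fun c _ ↦ by ring

lemma trace_submatrix_fst_hadamard_mul {ι κ R : Type*} [Fintype ι] [Fintype κ] [CommSemiring R]
    (L K : Matrix ι ι R) (W X : Matrix (ι × κ) (ι × κ) R) :
    ((L.submatrix Prod.fst Prod.fst ⊙ W) * (K.submatrix Prod.fst Prod.fst ⊙ X)).trace
      = ∑ i, ∑ j, L i j * (K j i *
          (W.submatrix (Prod.mk i) (Prod.mk j) * X.submatrix (Prod.mk j) (Prod.mk i)).trace) := by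
  simp only [trace, diag_apply, mul_apply, hadamard_apply, submatrix_apply,
    Fintype.sum_prod_type, Finset.mul_sum]
  refine Finset.sum_congr rfl fun i _ ↦ Finset.sum_comm.trans ?_
  exact Finset.sum_congr rfl fun j _ ↦ Finset.sum_congr rfl fun a _ ↦
    Finset.sum_congr rfl fun b _ ↦ by ring

lemma trace_LZmat_mul_hadamard (L K : Matrix (Fin n) (Fin n) ℝ)
    (Zb : Fin n → Matrix (Fin r) (Fin r) ℝ) (Y : Matrix (Fin n × Fin r) (Fin p) ℝ) :
    (LZmat L Zb * (K.submatrix Prod.fst Prod.fst ⊙ (Y * Yᵀ))).trace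
      = (L * (K ⊙ (aligned (Zstack Zb) Y * (aligned (Zstack Zb) Y)ᵀ))).trace := by
  have hsymm (i j : Fin n) : (aligned (Zstack Zb) Y * (aligned (Zstack Zb) Y)ᵀ) j i
      = (aligned (Zstack Zb) Y * (aligned (Zstack Zb) Y)ᵀ) i j :=
    congrFun₂ (by rw [transpose_mul, transpose_transpose] :
      (aligned (Zstack Zb) Y * (aligned (Zstack Zb) Y)ᵀ)ᵀ = _) i j
  simp only [LZmat_eq_hadamard, trace_submatrix_fst_hadamard_mul, submatrix_prodMk_mul_transpose,
    ← aligned_mul_transpose_apply']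
  refine Finset.sum_congr rfl fun i _ ↦ Eq.trans ?_ Matrix.mul_apply.symm
  exact Finset.sum_congr rfl fun j _ ↦ by rw [hadamard_apply, hsymm]

lemma trace_LZmat_mul_gram (L : Matrix (Fin n) (Fin n) ℝ) (Zb : Fin n → Matrix (Fin r) (Fin r) ℝ)
    (Y : Matrix (Fin n × Fin r) (Fin p) ℝ) :
    (LZmat L Zb * (Y * Yᵀ)).trace
      = (L * (aligned (Zstack Zb) Y * (aligned (Zstack Zb) Y)ᵀ)).trace := by
  have hone : (of 1 : Matrix (Fin n) (Fin n) ℝ).submatrix Prod.fst Prod.fst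
      = (of 1 : Matrix (Fin n × Fin r) (Fin n × Fin r) ℝ) :=
    rfl
  simpa only [hone, of_one_hadamard] using trace_LZmat_mul_hadamard L (of 1) Zb Y

lemma IsConnectedLaplacian.trace_LZmat_mul_gram_self (hL : IsConnectedLaplacian L)
    (hZ : Feasible (Zstack Zb)) :
    (LZmat L Zb * (Zstack Zb * (Zstack Zb)ᵀ)).trace = 0 := by
  rw [trace_LZmat_mul_gram, hZ.aligned_self_mul_transpose, hL.trace_mul_const]

lemma IsConnectedLaplacian.trace_LZmat_mul_sub_tangentDirGram_ge (hL : IsConnectedLaplacian L)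
    (hZ : Feasible (Zstack Zb)) (hY : Feasible Y) :
    ((p : ℝ) - r - 2) * (L * (aligned (Zstack Zb) Y * (aligned (Zstack Zb) Y)ᵀ)).trace
      ≤ (LZmat L Zb * (((p : ℝ) + r - 2) • (Y * Yᵀ) - tangentDirGram (Zstack Zb) Y)).trace := by
  have hsq := hL.trace_mul_hadamard_self_le (hZ.aligned_mul_transpose_diag hY)
  rw [hY.tangentDirGram_eq, Matrix.mul_sub, Matrix.mul_add, Matrix.mul_smul, Matrix.mul_smul,
    trace_sub, trace_add, trace_smul, trace_smul, trace_LZmat_mul_gram,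
    hL.trace_LZmat_mul_gram_self hZ, trace_LZmat_mul_hadamard, smul_eq_mul, smul_zero]
  linarith

section Noise

variable {Z : Matrix (Fin n × Fin r) (Fin r) ℝ}
  (N : Matrix (Fin n × Fin r) (Fin n × Fin r) ℝ)

lemma abs_trace_mul_gram_sub_le (hZ : Feasible Z) (hY : Feasible Y) :
    |(N * (Y * Yᵀ - Z * Zᵀ)).trace|
      ≤ 2 * opNorm N * √(n * r * (n * r - frobSq (Zᵀ * Y) / n)) := by
  obtain rfl | hn := eq_or_ne n 0
  · simp [trace]
  simpa only [hY.frobSq_eq] using abs_trace_mul_gram_sub_gram_le N (Nat.cast_ne_zero.2 hn)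
    hZ.transpose_mul_self hY.opNorm_sq_le (hZ.frobSq_eq.trans hY.frobSq_eq.symm)

lemma abs_trace_mul_aligned_hadamard_le (hZ : Feasible Z) (hY : Feasible Y) :
    |(N * ((aligned Z Y * (aligned Z Y)ᵀ - of fun _ _ ↦ (r : ℝ)).submatrix Prod.fst Prod.fst
        ⊙ (Y * Yᵀ))).trace|
      ≤ r * (2 * opNorm N * √(n * r * (n * r - frobSq (Zᵀ * Y) / n))) := by
  obtain rfl | hn := eq_or_ne n 0
  · simp [trace]
  obtain rfl | hr := eq_or_ne r 0
  · simp [trace]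
  have : NeZero n := ⟨hn⟩
  have : NeZero r := ⟨hr⟩
  have hr' : (0 : ℝ) < r := by positivity
  set V := (aligned Z Y).submatrix (Prod.fst (β := Fin r)) id with hV
  have hVdiag (q : Fin n × Fin r) : (V * Vᵀ) q q = r :=
    hZ.aligned_mul_transpose_diag hY q.1
  have hVsum : ∑ k, (∑ q, V q k) ^ 2 = (r : ℝ) ^ 2 * frobSq (Zᵀ * Y) := by
    simp [hV, Fintype.sum_prod_type, ← Finset.mul_sum, mul_pow, ← sum_sum_aligned_sq]
  have hcard : (Fintype.card (Fin n × Fin r) : ℝ) = n * r := by simp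
  have hradicand : (n * r * r * (n * r * r - r ^ 2 * frobSq (Zᵀ * Y) / (n * r)) : ℝ)
      = r ^ 2 * (n * r * (n * r - frobSq (Zᵀ * Y) / n)) := by
    field_simp
  have hopNorm : opNorm (N ⊙ (Y * Yᵀ)) ≤ opNorm N :=
    opNorm_hadamard_mul_transpose_le N (fun q ↦ (hY.diag_mul_transpose q).le)
      fun q ↦ (hY.diag_mul_transpose q).le
  have hconst := abs_trace_mul_gram_sub_const_le (N ⊙ (Y * Yᵀ)) hr' hVdiag
  rw [hcard, hVsum, hradicand, Real.sqrt_mul (sq_nonneg _), Real.sqrt_sq hr'.le] at hconst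
  rw [trace_mul_hadamard, transpose_mul, transpose_transpose]
  refine hconst.trans (le_of_le_of_eq ?_ (mul_left_comm _ _ _))
  gcongr

lemma abs_trace_mul_sub_tangentDirGram_le (hp : 2 ≤ p) (hZ : Feasible Z) (hY : Feasible Y) :
    |(N * (((p : ℝ) + r - 2) • (Y * Yᵀ) - tangentDirGram Z Y)).trace|
      ≤ 2 * (p + r - 2) * opNorm N * √(n * r * (n * r - frobSq (Zᵀ * Y) / n)) := by
  have hp' : 0 ≤ (p : ℝ) - 2 := sub_nonneg.2 (by exact_mod_cast hp)
  set H := (aligned Z Y * (aligned Z Y)ᵀ - of fun _ _ ↦ (r : ℝ)).submatrix Prod.fst Prod.fst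
    ⊙ (Y * Yᵀ) with hH
  set B := 2 * opNorm N * √(n * r * (n * r - frobSq (Zᵀ * Y) / n)) with hB
  have hsplit : ((p : ℝ) + r - 2) • (Y * Yᵀ) - tangentDirGram Z Y
      = ((p : ℝ) - 2) • (Y * Yᵀ - Z * Zᵀ) - H := by
    rw [hY.tangentDirGram_eq, hH]
    ext q q'
    simp only [Matrix.sub_apply, Matrix.add_apply, Matrix.smul_apply, hadamard_apply,
      submatrix_apply, of_apply, smul_eq_mul]
    ring
  calc |(N * (((p : ℝ) + r - 2) • (Y * Yᵀ) - tangentDirGram Z Y)).trace|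
    _ = |((p : ℝ) - 2) * (N * (Y * Yᵀ - Z * Zᵀ)).trace - (N * H).trace| := by
        rw [hsplit, Matrix.mul_sub, Matrix.mul_smul, trace_sub, trace_smul, smul_eq_mul]
    _ ≤ (p - 2) * B + r * B := by
        refine (abs_sub _ _).trans (add_le_add ?_ (abs_trace_mul_aligned_hadamard_le N hZ hY))
        rw [abs_mul, abs_of_nonneg hp']
        exact mul_le_mul_of_nonneg_left (abs_trace_mul_gram_sub_le N hZ hY) hp'
    _ = _ := by
        rw [hB]
        ring

end Noise

lemma IsConnectedLaplacian.mul_lam2_mul_sub_le (hL : IsConnectedLaplacian L)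
    (hp : r + 2 ≤ p) (hZ : Feasible (Zstack Zb)) (hY : Feasible Y)
    {Δ : Matrix (Fin n × Fin r) (Fin n × Fin r) ℝ}
    (hcrit : ∀ Ydot, IsTangent Y Ydot →
      0 ≤ (Smat (LZmat L Zb - Δ) Y * Ydot * Ydotᵀ).trace) :
    ((p : ℝ) - r - 2) * lam2 L * (n * r - frobSq ((Zstack Zb)ᵀ * Y) / n)
      ≤ 2 * (p + r - 2) * opNorm Δ
        * √(n * r * (n * r - frobSq ((Zstack Zb)ᵀ * Y) / n)) := by
  set E := ((p : ℝ) + r - 2) • (Y * Yᵀ) - tangentDirGram (Zstack Zb) Y with hE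
  have hgap : 0 ≤ (p : ℝ) - r - 2 := by
    have : (r : ℝ) + 2 ≤ p := by exact_mod_cast hp
    linarith
  have hpoincare := hL.lam2_mul_frobSq_sub_le (aligned (Zstack Zb) Y)
  rw [hZ.frobSq_aligned hY, sum_sum_aligned_sq] at hpoincare
  have hsecond : (LZmat L Zb * E).trace ≤ (Δ * E).trace := by
    have hle : ((LZmat L Zb - Δ) * E).trace ≤ 0 := by
      rw [hE, Matrix.mul_sub, Matrix.mul_smul, trace_sub, trace_smul, smul_eq_mul]
      exact sub_nonpos.2 (trace_mul_gram_le_trace_mul_tangentDirGram hZ hY hcrit)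
    rwa [Matrix.sub_mul, trace_sub, sub_nonpos] at hle
  calc ((p : ℝ) - r - 2) * lam2 L * (n * r - frobSq ((Zstack Zb)ᵀ * Y) / n)
    _ ≤ (p - r - 2) * (L * (aligned (Zstack Zb) Y * (aligned (Zstack Zb) Y)ᵀ)).trace := by
        rw [mul_assoc]
        exact mul_le_mul_of_nonneg_left hpoincare hgap
    _ ≤ (LZmat L Zb * E).trace := hL.trace_LZmat_mul_sub_tangentDirGram_ge hZ hY
    _ ≤ |(Δ * E).trace| := hsecond.trans (le_abs_self _)
    _ ≤ _ := abs_trace_mul_sub_tangentDirGram_le Δ (by omega) hZ hY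

end CostMatrix

section ErrorBound

variable {n r p : ℕ}

lemma le_div_sq_mul_of_mul_le_mul_sqrt {k b m s : ℝ} (hk : 0 < k) (hm : 0 ≤ m)
    (h : k * s ≤ b * √(m * s)) : s ≤ (b / k) ^ 2 * m := by
  obtain hs | hs := le_or_gt s 0
  · exact hs.trans (by positivity)
  have hsq : (k * s) ^ 2 ≤ b ^ 2 * (m * s) := by
    rw [← Real.sq_sqrt (by positivity : 0 ≤ m * s), ← mul_pow]
    exact pow_le_pow_left₀ (by positivity) h 2
  rw [div_pow, div_mul_eq_mul_div, le_div_iff₀ (by positivity)]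
  exact le_of_mul_le_mul_right (by linarith) hs

lemma Feasible.mul_transpose_eq_one [Subsingleton (Fin n)] {Y : Matrix (Fin n × Fin r) (Fin p) ℝ}
    (hY : Feasible Y) : Y * Yᵀ = 1 := by
  ext ⟨i, a⟩ ⟨j, b⟩
  obtain rfl := Subsingleton.elim i j
  have hblock : (Y * Yᵀ) (i, a) (i, b) = (1 : Matrix (Fin r) (Fin r) ℝ) a b :=
    congrFun₂ (hY i) a b
  simpa [Matrix.one_apply] using hblock

theorem noisy_error_bound_general (hp : r + 2 < p) {L : Matrix (Fin n) (Fin n) ℝ}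
    (hL : IsConnectedLaplacian L) {Zb : Fin n → Matrix (Fin r) (Fin r) ℝ}
    (hZb : ∀ i, Zb i * (Zb i)ᵀ = 1) (Δ : Matrix (Fin n × Fin r) (Fin n × Fin r) ℝ)
    {Y : Matrix (Fin n × Fin r) (Fin p) ℝ} (hY : Feasible Y)
    (hcrit : ∀ Ydot, IsTangent Y Ydot →
      0 ≤ (Smat (LZmat L Zb - Δ) Y * Ydot * Ydotᵀ).trace) :
    ((Zstack Zb * (Zstack Zb)ᵀ) * (Y * Yᵀ)ᵀ).trace ≥
      (1 - (2 * ((p : ℝ) + r - 2) / ((p : ℝ) - r - 2)) ^ 2 * opNorm Δ ^ 2 / lam2 L ^ 2)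
        * ((n : ℝ) ^ 2 * r) := by
  have hZ : Feasible (Zstack Zb) := hZb
  obtain hn | hn := lt_or_ge n 2
  · have : Subsingleton (Fin n) := Fin.subsingleton_iff_le_one.2 (by omega)
    rw [hY.mul_transpose_eq_one, transpose_one, Matrix.mul_one, ← frobSq_eq_trace, hZ.frobSq_eq]
    have hn' : (n : ℝ) ^ 2 = n := by interval_cases n <;> simp
    rw [hn']
    exact mul_le_of_le_one_left (by positivity) (sub_le_self 1 (by positivity))
  have hn0 : (0 : ℝ) < n := by positivity
  have hgap : 0 < (p : ℝ) - r - 2 := by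
    have : (r : ℝ) + 2 < p := by exact_mod_cast hp
    linarith
  have hdeficit := le_div_sq_mul_of_mul_le_mul_sqrt (mul_pos hgap (hL.lam2_pos hn))
    (by positivity) (hL.mul_lam2_mul_sub_le hp.le hZ hY hcrit)
  rw [mul_div_mul_comm, mul_pow, div_pow (opNorm Δ)] at hdeficit
  rw [trace_gram_mul_gram_transpose, ge_iff_le]
  calc _ = n * (n * r - (2 * ((p : ℝ) + r - 2) / (p - r - 2)) ^ 2
          * (opNorm Δ ^ 2 / lam2 L ^ 2) * (n * r)) := by ring
    _ ≤ n * (frobSq ((Zstack Zb)ᵀ * Y) / n) := by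
        gcongr
        linarith
    _ = frobSq ((Zstack Zb)ᵀ * Y) := mul_div_cancel₀ _ hn0.ne'

end ErrorBound

/-- **Theorem 1.6 (error bound for all second-order critical points).**  Suppose `G` is connected
and `p > r + 2`, and set `C_p = 2(p + r − 2)/(p − r − 2)`.  Then every second-order critical
point `Y` of the rank-`p` problem satisfies
`⟨Z Zᵀ, Y Yᵀ⟩ ≥ (1 − C_p² ‖Δ‖²/λ₂²) n² r`. -/
theorem noisy_error_bound
    (n r p : ℕ) (hn : 1 ≤ n) (hr : 1 ≤ r) (hrp : r ≤ p) (hp : r + 2 < p)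
    (G : SimpleGraph (Fin n)) [DecidableRel G.Adj] (hG : G.Connected)
    (Zb : Fin n → Matrix (Fin r) (Fin r) ℝ) (hZb : ∀ i, Zb i * (Zb i)ᵀ = 1)
    (Δ : Matrix (Fin n × Fin r) (Fin n × Fin r) ℝ) (hΔsym : Δᵀ = Δ)
    (hΔsupp : ∀ q q' : Fin n × Fin r, ¬ G.Adj q.1 q'.1 → Δ q q' = 0)
    (Lhat : Matrix (Fin n × Fin r) (Fin n × Fin r) ℝ)
    (hLhat : Lhat = LZmat (G.lapMatrix ℝ) Zb - Δ)
    (Cp : ℝ) (hCp : Cp = 2 * ((p : ℝ) + r - 2) / ((p : ℝ) - r - 2))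
    (Y : Matrix (Fin n × Fin r) (Fin p) ℝ)
    (hY : IsSecondOrderCritical Lhat Y) :
    ((Zstack Zb * (Zstack Zb)ᵀ) * (Y * Yᵀ)ᵀ).trace ≥
      (1 - Cp ^ 2 * opNorm Δ ^ 2 / lam2 (G.lapMatrix ℝ) ^ 2) * ((n : ℝ) ^ 2 * r) := by
  subst hLhat hCp
  exact noisy_error_bound_general hp (isConnectedLaplacian_lapMatrix hG) hZb Δ hY.1 hY.2.2

end SyncPaper
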